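/- Let n^m, n^{m−1}, p^m, p^{m−1} be pointwise-positive periodic grid functions such that n^m − p^m and n^{m−1} − p^{m−1} have zero mean. Then there exists exactly one pair (n^{m+1}, p^{m+1}) of pointwise-positive periodic grid functions with n^{m+1} − p^{m+1} of zero mean that solves the scheme. -/

import Mathlib

open scoped BigOperators

/-- The periodic grid of indices: `(ZMod N)^3`. -/
abbrev GridIdx (N : ℕ) := ZMod N × ZMod N × ZMod N

namespace PNP

/-- Shift the first index by `a`. -/
def xsh {N : ℕ} (p : GridIdx N) (a : ZMod N) : GridIdx N := (p.1 + a, p.2.1, p.2.2)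
/-- Shift the second index by `a`. -/
def ysh {N : ℕ} (p : GridIdx N) (a : ZMod N) : GridIdx N := (p.1, p.2.1 + a, p.2.2)
/-- Shift the third index by `a`. -/
def zsh {N : ℕ} (p : GridIdx N) (a : ZMod N) : GridIdx N := (p.1, p.2.1, p.2.2 + a)

/-- Forward difference in `x`: `(D_x f)(p) = (f(p + e_x) - f(p)) / h` with `h = 1/N`. -/
noncomputable def Dx (N : ℕ) (f : GridIdx N → ℝ) : GridIdx N → ℝ :=
  fun p => (f (xsh p 1) - f p) * N
/-- Forward difference in `y`. -/
noncomputable def Dy (N : ℕ) (f : GridIdx N → ℝ) : GridIdx N → ℝ :=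
  fun p => (f (ysh p 1) - f p) * N
/-- Forward difference in `z`. -/
noncomputable def Dz (N : ℕ) (f : GridIdx N → ℝ) : GridIdx N → ℝ :=
  fun p => (f (zsh p 1) - f p) * N

/-- Backward difference in `x`: `(d_x f)(p) = (f(p) - f(p - e_x)) / h`. -/
noncomputable def dxm (N : ℕ) (f : GridIdx N → ℝ) : GridIdx N → ℝ :=
  fun p => (f p - f (xsh p (-1))) * N
/-- Backward difference in `y`. -/
noncomputable def dym (N : ℕ) (f : GridIdx N → ℝ) : GridIdx N → ℝ :=
  fun p => (f p - f (ysh p (-1))) * N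
/-- Backward difference in `z`. -/
noncomputable def dzm (N : ℕ) (f : GridIdx N → ℝ) : GridIdx N → ℝ :=
  fun p => (f p - f (zsh p (-1))) * N

/-- Forward average in `x`: `(A_x f)(p) = (f(p + e_x) + f(p)) / 2`. -/
noncomputable def Ax (N : ℕ) (f : GridIdx N → ℝ) : GridIdx N → ℝ :=
  fun p => (f (xsh p 1) + f p) / 2
/-- Forward average in `y`. -/
noncomputable def Ay (N : ℕ) (f : GridIdx N → ℝ) : GridIdx N → ℝ :=
  fun p => (f (ysh p 1) + f p) / 2
/-- Forward average in `z`. -/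
noncomputable def Az (N : ℕ) (f : GridIdx N → ℝ) : GridIdx N → ℝ :=
  fun p => (f (zsh p 1) + f p) / 2

/-- The discrete Laplacian `Δ_h f = d_x(D_x f) + d_y(D_y f) + d_z(D_z f)`. -/
noncomputable def lap (N : ℕ) (f : GridIdx N → ℝ) : GridIdx N → ℝ :=
  fun p => dxm N (Dx N f) p + dym N (Dy N f) p + dzm N (Dz N f) p

/-- The discrete inner product `⟨f, g⟩ = h³ ∑ f·g` with `h = 1/N`. -/
noncomputable def ip (N : ℕ) [NeZero N] (f g : GridIdx N → ℝ) : ℝ :=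
  ((1 : ℝ) / N) ^ 3 * ∑ p : GridIdx N, f p * g p

/-- The discrete `L²` norm `‖f‖₂ = ⟨f, f⟩^{1/2}`. -/
noncomputable def l2 (N : ℕ) [NeZero N] (f : GridIdx N → ℝ) : ℝ :=
  Real.sqrt (ip N f f)

/-- The discrete maximum norm `‖f‖_∞ = max |f|`. -/
noncomputable def linf (N : ℕ) [NeZero N] (f : GridIdx N → ℝ) : ℝ :=
  ⨆ p : GridIdx N, |f p|

/-- A grid function has zero mean if its values sum to zero. -/
def zeroMean (N : ℕ) [NeZero N] (f : GridIdx N → ℝ) : Prop :=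
  ∑ p : GridIdx N, f p = 0

/-- With `F(x) = x·ln x`, the difference quotient `G¹_a(x) = (F(x) - F(a))/(x - a)`
for `x ≠ a`, with value `F'(a) = ln a + 1` at `x = a`. -/
noncomputable def G1 (a x : ℝ) : ℝ :=
  if x = a then Real.log a + 1
  else (x * Real.log x - a * Real.log a) / (x - a)

end PNP

open PNP

namespace PNP

/-- Regularized face mobility (in `x`) built from the extrapolation `(3/2)a - (1/2)b`:
`((A_x((3/2)a - (1/2)b))² + Δt⁶)^{1/2}`. -/
noncomputable def mobX (N : ℕ) (dt : ℝ) (a b : GridIdx N → ℝ) : GridIdx N → ℝ :=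
  fun p => Real.sqrt ((Ax N (fun q => (3/2) * a q - (1/2) * b q) p) ^ 2 + dt ^ 6)
/-- Regularized face mobility (in `y`). -/
noncomputable def mobY (N : ℕ) (dt : ℝ) (a b : GridIdx N → ℝ) : GridIdx N → ℝ :=
  fun p => Real.sqrt ((Ay N (fun q => (3/2) * a q - (1/2) * b q) p) ^ 2 + dt ^ 6)
/-- Regularized face mobility (in `z`). -/
noncomputable def mobZ (N : ℕ) (dt : ℝ) (a b : GridIdx N → ℝ) : GridIdx N → ℝ :=
  fun p => Real.sqrt ((Az N (fun q => (3/2) * a q - (1/2) * b q) p) ^ 2 + dt ^ 6)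

/-- The pair `(n1, p1)` solves the second-order scheme with data
`n0, nm1, p0, pm1`, with the chemical potentials `μn, μp`. -/
def SolvesSchemeWith (N : ℕ) [NeZero N] (dt Dc : ℝ)
    (n0 nm1 p0 pm1 n1 p1 μn μp : GridIdx N → ℝ) : Prop :=
  ∃ φn φp : GridIdx N → ℝ,
    zeroMean N φn ∧
    (∀ q, -lap N φn q = (n1 q + n0 q) / 2 - (p1 q + p0 q) / 2) ∧
    zeroMean N φp ∧
    (∀ q, -lap N φp q = (p1 q + p0 q) / 2 - (n1 q + n0 q) / 2) ∧
    (∀ q, μn q = G1 (n0 q) (n1 q) - 1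
      + dt * (Real.log (n1 q) - Real.log (n0 q)) + φn q) ∧
    (∀ q, μp q = G1 (p0 q) (p1 q) - 1
      + dt * (Real.log (p1 q) - Real.log (p0 q)) + φp q) ∧
    (∀ q, (n1 q - n0 q) / dt =
      dxm N (fun r => mobX N dt n0 nm1 r * Dx N μn r) q +
      dym N (fun r => mobY N dt n0 nm1 r * Dy N μn r) q +
      dzm N (fun r => mobZ N dt n0 nm1 r * Dz N μn r) q) ∧
    (∀ q, (p1 q - p0 q) / dt =
      dxm N (fun r => mobX N dt (fun s => Dc * p0 s) (fun s => Dc * pm1 s) r * Dx N μp r) q +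
      dym N (fun r => mobY N dt (fun s => Dc * p0 s) (fun s => Dc * pm1 s) r * Dy N μp r) q +
      dzm N (fun r => mobZ N dt (fun s => Dc * p0 s) (fun s => Dc * pm1 s) r * Dz N μp r) q)

/-- The pair `(n1, p1)` solves the second-order scheme, for some chemical potentials. -/
def SolvesScheme (N : ℕ) [NeZero N] (dt Dc : ℝ)
    (n0 nm1 p0 pm1 n1 p1 : GridIdx N → ℝ) : Prop :=
  ∃ μn μp : GridIdx N → ℝ, SolvesSchemeWith N dt Dc n0 nm1 p0 pm1 n1 p1 μn μp

end PNP

/-!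
Stack the unknowns as `u = (n, p)`. One step of the scheme reads `u + A (g u + K u) = u₀`, where
`A` (mobility-weighted diffusion) and `K` (Coulomb interaction) are positive semidefinite and `g`
acts nodewise by strictly increasing bijections `(0, ∞) → ℝ`. The term `Δt (ln n^{m+1} - ln n^m)`
is what makes `g` surjective, since the difference quotient `G¹` stays bounded below at `0`.

Uniqueness is monotonicity: for the difference `δ = u - v` of two solutions,
`⟨δ, g u - g v⟩ + ⟨δ, K δ⟩` is nonpositive because `A ≥ 0`, while its second term is nonnegative and
its first is positive unless `δ = 0`.

For existence, take `w = g u` as the unknown and let `Γ = g⁻¹ : ℝ → (0, ∞)`, so that no positivity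
bound has to be found. The equation `Γ w + A (w + K Γ w) = u₀` is not variational, but with
`K = Cᴴ C` and `φ = C Γ w` as a second unknown it becomes
`Γ w - u₀ + A (w + Cᴴ φ) = 0`, `φ - C u₀ + C A (w + Cᴴ φ) = 0`, the Euler–Lagrange system of a
coercive function, which attains its minimum.
-/

open Matrix Filter

lemma add_mul_sub_le_of_convexOn {s : Set ℝ} {f : ℝ → ℝ} {f' a x : ℝ} (hf : ConvexOn ℝ s f)
    (ha : a ∈ s) (hx : x ∈ s) (hd : HasDerivAt f f' a) : f a + f' * (x - a) ≤ f x := by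
  rcases lt_trichotomy a x with h | rfl | h
  · have := hf.le_slope_of_hasDerivAt ha hx h hd
    rw [slope_def_field, le_div_iff₀ (sub_pos.2 h)] at this
    linarith
  · simp
  · have := hf.slope_le_of_hasDerivAt hx ha h hd
    rw [slope_def_field, div_le_iff₀ (sub_pos.2 h)] at this
    linarith

lemma tendsto_cocompact_atTop_of_convexOn {f : ℝ → ℝ} {a b s t : ℝ} (hf : ConvexOn ℝ Set.univ f)
    (ha : HasDerivAt f s a) (hs : s < 0) (hb : HasDerivAt f t b) (ht : 0 < t) :
    Tendsto f (cocompact ℝ) atTop := by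
  rw [cocompact_eq_atBot_atTop, tendsto_sup]
  constructor
  · refine tendsto_atTop_mono
      (fun x => add_mul_sub_le_of_convexOn hf (Set.mem_univ a) (Set.mem_univ x) ha) ?_
    exact tendsto_atTop_add_const_left _ _
      ((tendsto_atBot_add_const_right _ _ tendsto_id).const_mul_atBot_of_neg hs)
  · refine tendsto_atTop_mono
      (fun x => add_mul_sub_le_of_convexOn hf (Set.mem_univ b) (Set.mem_univ x) hb) ?_
    exact tendsto_atTop_add_const_left _ _
      ((tendsto_atTop_add_const_right _ _ tendsto_id).const_mul_atTop ht)

lemma exists_hasDerivAt_tendsto_cocompact_atTop {f : ℝ → ℝ} (hc : Continuous f) (hm : Monotone f)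
    (hneg : ∃ a, f a < 0) (hpos : ∃ b, 0 < f b) :
    ∃ θ : ℝ → ℝ, (∀ x, HasDerivAt θ (f x) x) ∧
      Tendsto θ (cocompact ℝ) atTop := by
  obtain ⟨a, ha⟩ := hneg
  obtain ⟨b, hb⟩ := hpos
  have hθ : ∀ x, HasDerivAt (fun x => ∫ t in (0 : ℝ)..x, f t) (f x) x := fun x =>
    (hc.integral_hasStrictDerivAt 0 x).hasDerivAt
  have hconv : ConvexOn ℝ Set.univ fun x => ∫ t in (0 : ℝ)..x, f t := by
    refine Monotone.convexOn_univ_of_deriv (fun x => (hθ x).differentiableAt) ?_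
    rwa [funext fun x => (hθ x).deriv]
  exact ⟨_, hθ, tendsto_cocompact_atTop_of_convexOn hconv (hθ a) ha (hθ b) hb⟩

lemma tendsto_sum_cocompact_atTop {κ : Type*} [Fintype κ] {X : κ → Type*}
    [∀ k, TopologicalSpace (X k)] [∀ k, Nonempty (X k)] {θ : ∀ k, X k → ℝ}
    (hc : ∀ k, Continuous (θ k))
    (hθ : ∀ k, Tendsto (θ k) (cocompact (X k)) atTop) :
    Tendsto (fun x : ∀ k, X k => ∑ k, θ k (x k)) (cocompact (∀ k, X k))
      atTop := by
  classical
  choose x₀ hx₀ using fun k => (hc k).exists_forall_le (hθ k)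
  rw [← coprodᵢ_cocompact, Filter.coprodᵢ, tendsto_iSup]
  intro k
  refine tendsto_atTop_mono (f := fun x : ∀ k, X k =>
    θ k (x k) + ∑ l ∈ Finset.univ.erase k, θ l (x₀ l)) (fun x => ?_)
    (tendsto_atTop_add_const_right _ _ ((hθ k).comp tendsto_comap))
  rw [← Finset.add_sum_erase _ _ (Finset.mem_univ k)]
  gcongr with l
  exact hx₀ l _

lemma hasDerivAt_dotProduct_mulVec_add_smul {κ : Type*} [Fintype κ] {A : Matrix κ κ ℝ}
    (hA : A.IsHermitian) (x y : κ → ℝ) :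
    HasDerivAt (fun t : ℝ => (x + t • y) ⬝ᵥ A *ᵥ (x + t • y)) (2 * ((A *ᵥ x) ⬝ᵥ y)) 0 := by
  have hsymm : x ⬝ᵥ A *ᵥ y = (A *ᵥ x) ⬝ᵥ y := by
    rw [dotProduct_mulVec, ← mulVec_transpose, ← conjTranspose_eq_transpose_of_trivial, hA.eq]
  have hexp : (fun t : ℝ => (x + t • y) ⬝ᵥ A *ᵥ (x + t • y)) = fun t =>
      x ⬝ᵥ A *ᵥ x + t * (2 * ((A *ᵥ x) ⬝ᵥ y)) + t ^ 2 * (y ⬝ᵥ A *ᵥ y) := by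
    funext t
    simp only [mulVec_add, mulVec_smul, add_dotProduct, dotProduct_add, smul_dotProduct,
      dotProduct_smul, smul_eq_mul, hsymm, dotProduct_comm y (A *ᵥ x)]
    ring
  rw [hexp]
  have h1 := ((hasDerivAt_id (0 : ℝ)).mul_const (2 * ((A *ᵥ x) ⬝ᵥ y))).const_add (x ⬝ᵥ A *ᵥ x)
  have h2 := (hasDerivAt_pow 2 (0 : ℝ)).mul_const (y ⬝ᵥ A *ᵥ y)
  exact (h1.fun_add h2).congr_deriv (by simp)

theorem exists_apply_add_mulVec_eq_zero {κ : Type*} [Fintype κ] {A : Matrix κ κ ℝ}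
    (hA : A.PosSemidef) {f : κ → ℝ → ℝ} (hc : ∀ k, Continuous (f k)) (hm : ∀ k, Monotone (f k))
    (hneg : ∀ k, ∃ a, f k a < 0) (hpos : ∀ k, ∃ b, 0 < f k b) :
    ∃ x : κ → ℝ, (fun k => f k (x k)) + A *ᵥ x = 0 := by
  choose θ hθ hθtop using fun k =>
    exists_hasDerivAt_tendsto_cocompact_atTop (hc k) (hm k) (hneg k) (hpos k)
  have hθc : ∀ k, Continuous (θ k) := fun k =>
    continuous_iff_continuousAt.2 fun x => (hθ k x).continuousAt
  let E : (κ → ℝ) → ℝ := fun x => ∑ k, θ k (x k) + 1 / 2 * (x ⬝ᵥ A *ᵥ x)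
  have hEc : Continuous E := by fun_prop
  have hEtop : Tendsto E (cocompact _) atTop :=
    tendsto_atTop_mono
      (fun x => le_add_of_nonneg_right <|
        mul_nonneg one_half_pos.le (by simpa using hA.dotProduct_mulVec_nonneg x))
      (tendsto_sum_cocompact_atTop hθc hθtop)
  obtain ⟨x, hx⟩ := hEc.exists_forall_le hEtop
  refine ⟨x, dotProduct_eq_zero _ fun y => ?_⟩
  have hsum : HasDerivAt (fun t : ℝ => ∑ k, θ k ((x + t • y) k)) (∑ k, f k (x k) * y k) 0 := by
    refine HasDerivAt.fun_sum fun k _ => ?_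
    have hline : HasDerivAt (fun t : ℝ => (x + t • y) k) (y k) 0 := by
      simpa using ((hasDerivAt_id (0 : ℝ)).mul_const (y k)).const_add (x k)
    exact HasDerivAt.comp 0 (by simpa using hθ k (x k)) hline
  have hE : HasDerivAt (fun t : ℝ => E (x + t • y))
      (((fun k => f k (x k)) + A *ᵥ x) ⬝ᵥ y) 0 := by
    refine (hsum.add
      ((hasDerivAt_dotProduct_mulVec_add_smul hA.isHermitian x y).const_mul (1 / 2))).congr_deriv ?_
    rw [add_dotProduct, ← mul_assoc, one_div_mul_cancel two_ne_zero, one_mul]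
    rfl
  have hmin : IsLocalMin (fun t : ℝ => E (x + t • y)) 0 :=
    Eventually.of_forall fun t => by simpa using hx (x + t • y)
  exact hmin.hasDerivAt_eq_zero hE

lemma exists_continuous_strictMono_invOn {s : Set ℝ} (hs : s.OrdConnected) {g : ℝ → ℝ}
    (hg : StrictMonoOn g s) (hsurj : Set.SurjOn g s Set.univ) :
    ∃ Γ : ℝ → ℝ, Continuous Γ ∧ StrictMono Γ ∧ (∀ w, Γ w ∈ s) ∧ Set.InvOn Γ g s Set.univ := by
  let e : s ≃o ℝ := hg.domRestrict.orderIsoOfSurjective _ fun w =>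
    let ⟨x, hx, hxw⟩ := hsurj (Set.mem_univ w)
    ⟨⟨x, hx⟩, hxw⟩
  refine ⟨fun w => e.symm w, continuous_subtype_val.comp e.symm.continuous,
    fun v w hvw => e.symm.strictMono hvw, fun w => (e.symm w).2, fun x hx => ?_, fun w _ => ?_⟩
  · exact congrArg Subtype.val (e.symm_apply_apply ⟨x, hx⟩)
  · exact e.apply_symm_apply w

lemma sub_mul_sub_pos_of_strictMonoOn {s : Set ℝ} {g : ℝ → ℝ} (hg : StrictMonoOn g s) {x y : ℝ}
    (hx : x ∈ s) (hy : y ∈ s) (hxy : x ≠ y) : 0 < (x - y) * (g x - g y) := by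
  rcases hxy.lt_or_gt with h | h
  · exact mul_pos_of_neg_of_neg (sub_neg.2 h) (sub_neg.2 (hg hx hy h))
  · exact mul_pos (sub_pos.2 h) (sub_pos.2 (hg hy hx h))

section SemilinearSystem

variable {ι : Type*} [Fintype ι] {A K : Matrix ι ι ℝ}

lemma eq_of_add_mulVec_eq (hA : A.PosSemidef) (hK : K.PosSemidef) {s : ι → Set ℝ}
    {g : ι → ℝ → ℝ} (hg : ∀ i, StrictMonoOn (g i) (s i)) {u v : ι → ℝ} (hu : ∀ i, u i ∈ s i)
    (hv : ∀ i, v i ∈ s i)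
    (h : u + A *ᵥ ((fun i => g i (u i)) + K *ᵥ u) = v + A *ᵥ ((fun i => g i (v i)) + K *ᵥ v)) :
    u = v := by
  by_contra huv
  obtain ⟨j, hj⟩ := Function.ne_iff.1 huv
  let δ : ι → ℝ := fun i => g i (u i) - g i (v i)
  have hdiff : u - v = -(A *ᵥ (δ + K *ᵥ (u - v))) := by
    have hδ : δ + K *ᵥ (u - v) =
        ((fun i => g i (u i)) + K *ᵥ u) - ((fun i => g i (v i)) + K *ᵥ v) := by
      rw [mulVec_sub, add_sub_add_comm]
      rfl
    rw [hδ, mulVec_sub, neg_sub, sub_eq_sub_iff_add_eq_add, h, add_comm]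
  have hdissip : (u - v) ⬝ᵥ (δ + K *ᵥ (u - v)) ≤ 0 := by
    nth_rw 1 [hdiff]
    rw [neg_dotProduct, dotProduct_comm, neg_nonpos]
    simpa using hA.dotProduct_mulVec_nonneg (δ + K *ᵥ (u - v))
  have hK' : 0 ≤ (u - v) ⬝ᵥ K *ᵥ (u - v) := by
    simpa using hK.dotProduct_mulVec_nonneg (u - v)
  have hδpos : 0 < (u - v) ⬝ᵥ δ := by
    refine Finset.sum_pos' (fun i _ => ?_)
      ⟨j, Finset.mem_univ j, sub_mul_sub_pos_of_strictMonoOn (hg j) (hu j) (hv j) hj⟩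
    rcases eq_or_ne (u i) (v i) with hi | hi
    · simp [hi]
    · exact (sub_mul_sub_pos_of_strictMonoOn (hg i) (hu i) (hv i) hi).le
  rw [dotProduct_add] at hdissip
  linarith

open scoped MatrixOrder in
lemma exists_eq_conjTranspose_mul_self (hK : K.PosSemidef) : ∃ C : Matrix ι ι ℝ, K = Cᴴ * C := by
  classical exact CStarAlgebra.nonneg_iff_eq_star_mul_self.mp hK.nonneg

lemma exists_apply_add_mulVec_add_mulVec_apply_eq (hA : A.PosSemidef) (hK : K.PosSemidef)
    {Γ : ι → ℝ → ℝ} {u₀ : ι → ℝ} (hc : ∀ i, Continuous (Γ i)) (hm : ∀ i, Monotone (Γ i))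
    (hlt : ∀ i, ∃ a, Γ i a < u₀ i) (hgt : ∀ i, ∃ b, u₀ i < Γ i b) :
    ∃ w : ι → ℝ, (fun i => Γ i (w i)) + A *ᵥ (w + K *ᵥ fun i => Γ i (w i)) = u₀ := by
  classical
  obtain ⟨C, rfl⟩ := exists_eq_conjTranspose_mul_self hK
  let f : ι ⊕ ι → ℝ → ℝ := Sum.elim (fun i x => Γ i x - u₀ i) (fun j y => y - (C *ᵥ u₀) j)
  obtain ⟨z, hz⟩ := exists_apply_add_mulVec_eq_zero (f := f)
    (hA.conjTranspose_mul_mul_same (fromCols 1 Cᴴ))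
    (Sum.rec (fun i => (hc i).sub continuous_const) fun _ => continuous_id.sub continuous_const)
    (Sum.rec (fun i _ _ h => sub_le_sub_right (hm i h) _) fun _ _ _ h => sub_le_sub_right h _)
    (Sum.rec (fun i => (hlt i).imp fun _ => sub_neg.2)
      fun j => ⟨(C *ᵥ u₀) j - 1, sub_neg.2 (sub_one_lt _)⟩)
    (Sum.rec (fun i => (hgt i).imp fun _ => sub_pos.2)
      fun j => ⟨(C *ᵥ u₀) j + 1, sub_pos.2 (lt_add_one _)⟩)
  obtain ⟨w, φ, rfl⟩ : ∃ w φ, z = Sum.elim w φ := ⟨_, _, (Sum.elim_comp_inl_inr z).symm⟩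
  let u : ι → ℝ := fun i => Γ i (w i)
  have hf : (fun k => f k (Sum.elim w φ k)) = Sum.elim (u - u₀) (φ - C *ᵥ u₀) := by
    ext (i | j) <;> rfl
  rw [hf, conjTranspose_fromCols_eq_fromRows_conjTranspose, ← mulVec_mulVec, ← mulVec_mulVec,
    fromCols_mulVec_sumElim, fromRows_mulVec, conjTranspose_one, conjTranspose_conjTranspose,
    one_mulVec, one_mulVec, ← Sum.elim_add_add, ← Sum.elim_zero_zero, Sum.elim_eq_iff] at hz
  obtain ⟨hu, hφ⟩ := hz
  have hφu : φ = C *ᵥ u := by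
    have hCu := congrArg (C *ᵥ ·) hu
    simp only [mulVec_add C, mulVec_sub C, mulVec_zero] at hCu
    exact sub_left_injective (add_left_injective _ (hφ.trans hCu.symm))
  refine ⟨w, ?_⟩
  rw [← mulVec_mulVec, ← hφu, ← sub_eq_zero, ← hu]
  exact add_sub_right_comm _ _ _

theorem existsUnique_add_mulVec_eq (hA : A.PosSemidef) (hK : K.PosSemidef) {s : ι → Set ℝ}
    (hs : ∀ i, (s i).OrdConnected) {g : ι → ℝ → ℝ} (hg : ∀ i, StrictMonoOn (g i) (s i))
    (hsurj : ∀ i, Set.SurjOn (g i) (s i) Set.univ) {u₀ : ι → ℝ} (hu₀ : ∀ i, u₀ i ∈ s i) :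
    ∃! u : ι → ℝ, (∀ i, u i ∈ s i) ∧ u + A *ᵥ ((fun i => g i (u i)) + K *ᵥ u) = u₀ := by
  choose Γ hΓc hΓm hΓs hΓg using fun i => exists_continuous_strictMono_invOn (hs i) (hg i) (hsurj i)
  have hΓu₀ : ∀ i, Γ i (g i (u₀ i)) = u₀ i := fun i => (hΓg i).1 (hu₀ i)
  obtain ⟨w, hw⟩ := exists_apply_add_mulVec_add_mulVec_apply_eq hA hK hΓc
    (fun i => (hΓm i).monotone)
    (fun i => ⟨g i (u₀ i) - 1, (hΓm i (sub_one_lt _)).trans_eq (hΓu₀ i)⟩)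
    (fun i => ⟨g i (u₀ i) + 1, (hΓu₀ i).symm.trans_lt (hΓm i (lt_add_one _))⟩)
  have hgΓ : (fun i => g i (Γ i (w i))) = w := funext fun i => (hΓg i).2 (Set.mem_univ _)
  refine ⟨fun i => Γ i (w i), ⟨fun i => hΓs i _, by rw [hgΓ, hw]⟩, ?_⟩
  rintro u ⟨hus, hu⟩
  exact eq_of_add_mulVec_eq hA hK hg hus (fun i => hΓs i _) (by rw [hu, hgΓ, hw])

end SemilinearSystem

lemma posSemidef_fromBlocks_zero {m n : Type*} [Finite m] [Finite n] {A : Matrix m m ℝ}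
    {D : Matrix n n ℝ} (hA : A.PosSemidef) (hD : D.PosSemidef) :
    (fromBlocks A 0 0 D).PosSemidef := by
  have := Fintype.ofFinite m
  have := Fintype.ofFinite n
  refine .of_dotProduct_mulVec_nonneg
    (.fromBlocks hA.isHermitian (by simp) hD.isHermitian) fun z => ?_
  obtain ⟨x, y, rfl⟩ : ∃ x y, z = Sum.elim x y := ⟨_, _, (Sum.elim_comp_inl_inr z).symm⟩
  have hx := hA.dotProduct_mulVec_nonneg x
  have hy := hD.dotProduct_mulVec_nonneg y
  simp only [star_trivial] at hx hy ⊢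
  simp only [fromBlocks_mulVec, Sum.elim_comp_inl, Sum.elim_comp_inr, zero_mulVec, add_zero,
    zero_add, sumElim_dotProduct_sumElim]
  exact add_nonneg hx hy

lemma posSemidef_fromBlocks_neg {n : Type*} [Finite n] {G : Matrix n n ℝ}
    (hG : G.PosSemidef) : (fromBlocks G (-G) (-G) G).PosSemidef := by
  classical
  have := Fintype.ofFinite n
  have hfactor : fromBlocks G (-G) (-G) G =
      (fromCols 1 (-1) : Matrix n (n ⊕ n) ℝ)ᴴ * G * (fromCols 1 (-1) : Matrix n (n ⊕ n) ℝ) := by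
    rw [conjTranspose_fromCols_eq_fromRows_conjTranspose, fromRows_mul, fromRows_mul_fromCols]
    simp
  exact hfactor ▸ hG.conjTranspose_mul_mul_same _

lemma sum_mulVec_eq_zero_of_mulVec_one {X : Type*} [Fintype X] {L : Matrix X X ℝ}
    (hL : L.IsHermitian) (hone : L *ᵥ 1 = 0) (f : X → ℝ) : ∑ p, (L *ᵥ f) p = 0 := by
  rw [← one_dotProduct, dotProduct_mulVec, ← mulVec_transpose,
    ← conjTranspose_eq_transpose_of_trivial, hL.eq, hone, zero_dotProduct]

lemma add_vecMulVec_one_one_mulVec {X : Type*} [Fintype X] (L : Matrix X X ℝ) (f : X → ℝ) :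
    (L + vecMulVec 1 1) *ᵥ f = L *ᵥ f + fun _ => ∑ p, f p := by
  rw [add_mulVec, vecMulVec_mulVec, one_dotProduct]
  ext q
  simp

lemma posDef_add_vecMulVec_one_one {X : Type*} [Fintype X] {L : Matrix X X ℝ}
    (hL : L.PosSemidef) (hker : ∀ f, L *ᵥ f = 0 → ∀ p q, f p = f q) :
    (L + vecMulVec 1 1).PosDef := by
  have hone : (vecMulVec (1 : X → ℝ) 1).PosSemidef := by
    simpa using posSemidef_vecMulVec_self_star (1 : X → ℝ)
  refine .of_dotProduct_mulVec_pos (hL.add hone).isHermitian fun f hf => ?_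
  refine ((hL.add hone).dotProduct_mulVec_nonneg f).lt_of_ne' fun h0 => hf ?_
  have hLf : 0 ≤ f ⬝ᵥ L *ᵥ f := by simpa using hL.dotProduct_mulVec_nonneg f
  have hsplit : f ⬝ᵥ L *ᵥ f + (∑ p, f p) ^ 2 = 0 := by
    rw [add_vecMulVec_one_one_mulVec, star_trivial, dotProduct_add] at h0
    rwa [sq, Finset.sum_mul]
  obtain ⟨hquad, hsum⟩ := (add_eq_zero_iff_of_nonneg hLf (sq_nonneg _)).1 hsplit
  rw [pow_eq_zero_iff two_ne_zero] at hsum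
  have hconst := hker f ((hL.dotProduct_mulVec_zero_iff f).1 (by rwa [star_trivial]))
  ext q
  have hX : Nonempty X := ⟨q⟩
  simpa [Finset.sum_congr rfl fun p _ => hconst p q] using hsum

section GreenMatrix

variable {X : Type*} [Fintype X] [DecidableEq X] {L : Matrix X X ℝ}

/-- Inverse of `-Δ` on zero-sum functions, for a discrete Laplacian `L = -Δ` whose kernel is the
constants: adding the all-ones matrix makes `L` invertible and preserves its action on zero-sum
functions. -/
noncomputable def greenMatrix (L : Matrix X X ℝ) : Matrix X X ℝ := (L + vecMulVec 1 1)⁻¹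

lemma posSemidef_greenMatrix (hL : L.PosSemidef) (hker : ∀ f, L *ᵥ f = 0 → ∀ p q, f p = f q) :
    (greenMatrix L).PosSemidef :=
  (posDef_add_vecMulVec_one_one hL hker).inv.posSemidef

lemma sum_eq_zero_and_mulVec_eq_iff (hL : L.PosSemidef) (hone : L *ᵥ 1 = 0)
    (hker : ∀ f, L *ᵥ f = 0 → ∀ p q, f p = f q) {r : X → ℝ} (hr : ∑ p, r p = 0) (φ : X → ℝ) :
    (∑ p, φ p = 0 ∧ L *ᵥ φ = r) ↔ φ = greenMatrix L *ᵥ r := by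
  have hdet := (isUnit_iff_isUnit_det _).1 (posDef_add_vecMulVec_one_one hL hker).isUnit
  have hinv : φ = greenMatrix L *ᵥ r ↔ L *ᵥ φ + (fun _ => ∑ p, φ p) = r := by
    rw [← add_vecMulVec_one_one_mulVec, greenMatrix]
    constructor
    · rintro rfl
      rw [mulVec_mulVec, mul_nonsing_inv _ hdet, one_mulVec]
    · rintro rfl
      rw [mulVec_mulVec, nonsing_inv_mul _ hdet, one_mulVec]
  rw [hinv]
  constructor
  · rintro ⟨hφ, rfl⟩
    ext q
    simp [hφ]
  · intro h
    have hφ : ∑ p, φ p = 0 := by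
      have hsum := congrArg (fun f => ∑ p, f p) h
      simp only [Pi.add_apply, Finset.sum_add_distrib, hr, Finset.sum_const, zero_add,
        sum_mulVec_eq_zero_of_mulVec_one hL.isHermitian hone, Finset.card_univ,
        smul_eq_zero] at hsum
      rcases hsum with hcard | hφ
      · have := Fintype.card_eq_zero_iff.1 hcard
        exact Fintype.sum_empty φ
      · exact hφ
    exact ⟨hφ, by rw [← h, hφ]; exact (add_zero _).symm⟩

end GreenMatrix

section WeightedLaplacian

/-- The difference quotient `f ↦ c • (f ∘ σ - f)` along a permutation `σ` of the nodes, where `c`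
is the reciprocal of the mesh width. -/
def diffMatrix {X : Type*} [DecidableEq X] (c : ℝ) (σ : Equiv.Perm X) : Matrix X X ℝ :=
  c • (σ.permMatrix ℝ - 1)

lemma conjTranspose_diffMatrix {X : Type*} [DecidableEq X] (c : ℝ) (σ : Equiv.Perm X) :
    (diffMatrix c σ)ᴴ = diffMatrix c σ⁻¹ := by
  simp [diffMatrix]

variable {X α : Type*} [Fintype X] [DecidableEq X] [Fintype α]

lemma diffMatrix_mulVec (c : ℝ) (σ : Equiv.Perm X) (f : X → ℝ) (p : X) :
    (diffMatrix c σ *ᵥ f) p = c * (f (σ p) - f p) := by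
  simp [diffMatrix, smul_mulVec, sub_mulVec, permMatrix_mulVec]

/-- The divergence-form operator `f ↦ -∑ₐ div (M a • ∇ f)` in which `∇` differences along the
permutations `σ a`; the Laplacian `-Δ` is the case `M = 1`. -/
def weightedLaplacian (c : ℝ) (σ : α → Equiv.Perm X) (M : α → X → ℝ) : Matrix X X ℝ :=
  ∑ a, (diffMatrix c (σ a))ᴴ * diagonal (M a) * diffMatrix c (σ a)

variable {c : ℝ} {σ : α → Equiv.Perm X} {M : α → X → ℝ}

lemma weightedLaplacian_mulVec (f : X → ℝ) (p : X) :
    (weightedLaplacian c σ M *ᵥ f) p =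
      ∑ a, c * (M a ((σ a)⁻¹ p) * (c * (f p - f ((σ a)⁻¹ p))) -
        M a p * (c * (f (σ a p) - f p))) := by
  simp only [weightedLaplacian, sum_mulVec, ← mulVec_mulVec, Finset.sum_apply,
    conjTranspose_diffMatrix, diffMatrix_mulVec, mulVec_diagonal, Equiv.Perm.inv_def,
    Equiv.apply_symm_apply]

lemma dotProduct_weightedLaplacian_mulVec (f : X → ℝ) :
    f ⬝ᵥ weightedLaplacian c σ M *ᵥ f = ∑ a, ∑ p, M a p * (c * (f (σ a p) - f p)) ^ 2 := by
  simp only [weightedLaplacian, sum_mulVec, ← mulVec_mulVec, dotProduct_sum]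
  refine Finset.sum_congr rfl fun a _ => ?_
  rw [dotProduct_mulVec, conjTranspose_eq_transpose_of_trivial, vecMul_transpose]
  refine Finset.sum_congr rfl fun p _ => ?_
  rw [mulVec_diagonal, diffMatrix_mulVec]
  ring

lemma posSemidef_weightedLaplacian (hM : 0 ≤ M) : (weightedLaplacian c σ M).PosSemidef :=
  posSemidef_sum _ fun a _ => (PosSemidef.diagonal (hM a)).conjTranspose_mul_mul_same _

lemma weightedLaplacian_mulVec_one : weightedLaplacian c σ M *ᵥ 1 = 0 := by
  ext p
  simp [weightedLaplacian_mulVec]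

lemma sum_weightedLaplacian_mulVec (hM : 0 ≤ M) (f : X → ℝ) :
    ∑ p, (weightedLaplacian c σ M *ᵥ f) p = 0 :=
  sum_mulVec_eq_zero_of_mulVec_one (posSemidef_weightedLaplacian hM).isHermitian
    weightedLaplacian_mulVec_one f

lemma apply_eq_of_weightedLaplacian_mulVec_eq_zero (hc : c ≠ 0) (hM : ∀ a p, 0 < M a p)
    {f : X → ℝ} (hf : weightedLaplacian c σ M *ᵥ f = 0) (a : α) (p : X) : f (σ a p) = f p := by
  have hterm : ∀ a p, 0 ≤ M a p * (c * (f (σ a p) - f p)) ^ 2 := fun a p =>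
    mul_nonneg (hM a p).le (sq_nonneg _)
  have henergy : ∑ a, ∑ p, M a p * (c * (f (σ a p) - f p)) ^ 2 = 0 := by
    rw [← dotProduct_weightedLaplacian_mulVec, hf, dotProduct_zero]
  have ha := (Fintype.sum_eq_zero_iff_of_nonneg fun a => Fintype.sum_nonneg (hterm a)).1 henergy
  have hap := (Fintype.sum_eq_zero_iff_of_nonneg (hterm a)).1 (congrFun ha a)
  simpa [(hM a p).ne', hc, sub_eq_zero] using congrFun hap p

end WeightedLaplacian

lemma monotoneOn_dslope_of_convexOn {s : Set ℝ} {f : ℝ → ℝ} {a : ℝ} (hf : ConvexOn ℝ s f)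
    (ha : a ∈ s) (hd : DifferentiableAt ℝ f a) : MonotoneOn (dslope f a) s := by
  intro x hx y hy hxy
  rcases eq_or_ne x a with rfl | hxa
  · rcases hxy.eq_or_lt with rfl | hlt
    · rfl
    · rw [dslope_same, dslope_of_ne f hlt.ne']
      exact hf.le_slope_of_hasDerivAt hx hy hlt hd.hasDerivAt
  rcases eq_or_ne y a with rfl | hya
  · rw [dslope_same, dslope_of_ne f hxa, slope_comm]
    exact hf.slope_le_of_hasDerivAt hx hy (hxy.lt_of_ne hxa) hd.hasDerivAt
  · rw [dslope_of_ne f hxa, dslope_of_ne f hya]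
    exact hf.slope_mono ha ⟨hx, hxa⟩ ⟨hy, hya⟩ hxy

lemma surjective_add_mul_of_monotone {f : ℝ → ℝ} (hc : Continuous f) (hm : Monotone f) {c : ℝ}
    (hpos : 0 < c) : Function.Surjective fun x => f x + c * x := by
  have htop : Tendsto (fun x => f 0 + c * x) atTop atTop :=
    tendsto_atTop_add_const_left _ _ (tendsto_id.const_mul_atTop hpos)
  have hbot : Tendsto (fun x => f 0 + c * x) atBot atBot :=
    tendsto_atBot_add_const_left _ _ (tendsto_id.const_mul_atBot hpos)
  refine Continuous.surjective (by fun_prop) (tendsto_atTop_mono' _ ?_ htop)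
    (tendsto_atBot_mono' _ ?_ hbot)
  · filter_upwards [eventually_ge_atTop 0] with x hx using by gcongr; exact hm hx
  · filter_upwards [eventually_le_atBot 0] with x hx using by gcongr; exact hm hx

namespace PNP

lemma G1_eq_dslope {a : ℝ} (ha : 0 < a) : G1 a = dslope (fun y => y * Real.log y) a := by
  ext x
  unfold G1
  split_ifs with h
  · rw [h, dslope_same, Real.deriv_mul_log ha.ne']
  · rw [dslope_of_ne _ h, slope_def_field]

lemma monotoneOn_G1 {a : ℝ} (ha : 0 < a) : MonotoneOn (G1 a) (Set.Ioi 0) := by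
  rw [G1_eq_dslope ha]
  exact (monotoneOn_dslope_of_convexOn Real.convexOn_mul_log ha.le
    (Real.hasDerivAt_mul_log ha.ne').differentiableAt).mono Set.Ioi_subset_Ici_self

lemma continuousOn_G1 {a : ℝ} (ha : 0 < a) : ContinuousOn (G1 a) (Set.Ioi 0) := by
  rw [G1_eq_dslope ha, continuousOn_dslope (Ioi_mem_nhds ha)]
  exact ⟨Real.continuous_mul_log.continuousOn, (Real.hasDerivAt_mul_log ha.ne').differentiableAt⟩

/-- The part of the chemical potentials `μ_n`, `μ_p` that is local in the unknown `x = n^{m+1}`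
or `p^{m+1}`, with `a` the value at the previous time level. -/
noncomputable def localPotential (dt a x : ℝ) : ℝ :=
  G1 a x - 1 + dt * (Real.log x - Real.log a)

variable {dt a : ℝ}

lemma strictMonoOn_localPotential (hdt : 0 < dt) (ha : 0 < a) :
    StrictMonoOn (localPotential dt a) (Set.Ioi 0) := fun _ hx _ hy hxy =>
  add_lt_add_of_le_of_lt (sub_le_sub_right (monotoneOn_G1 ha hx hy hxy.le) _)
    (mul_lt_mul_of_pos_left (sub_lt_sub_right (Real.log_lt_log hx hxy) _) hdt)

lemma surjOn_localPotential (hdt : 0 < dt) (ha : 0 < a) :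
    Set.SurjOn (localPotential dt a) (Set.Ioi 0) Set.univ := by
  intro w _
  have hcont : Continuous fun s => G1 a (Real.exp s) :=
    (continuousOn_G1 ha).comp_continuous Real.continuous_exp Real.exp_pos
  have hmono : Monotone fun s => G1 a (Real.exp s) := fun s t hst =>
    monotoneOn_G1 ha (Real.exp_pos s) (Real.exp_pos t) (Real.exp_monotone hst)
  obtain ⟨s, hs⟩ := surjective_add_mul_of_monotone hcont hmono hdt (w + 1 + dt * Real.log a)
  refine ⟨Real.exp s, Real.exp_pos s, ?_⟩
  rw [localPotential, Real.log_exp]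
  linear_combination hs

end PNP

lemma apply_eq_apply_zero_of_periodic {N : ℕ} [NeZero N] {β : Type*} {f : ZMod N → β}
    (hf : Function.Periodic f 1) (i : ZMod N) : f i = f 0 := by
  simpa using hf.nat_mul_eq i.val

namespace PNP

section Grid

variable (N : ℕ)

/-- The unit translations `q ↦ q + e_x`, `q + e_y`, `q + e_z` of the periodic grid. -/
def axisShift : Fin 3 → Equiv.Perm (GridIdx N) :=
  ![Equiv.addRight (1, 0, 0), Equiv.addRight (0, 1, 0), Equiv.addRight (0, 0, 1)]

/-- The grid operator `f ↦ -(d_x(M₀ D_x f) + d_y(M₁ D_y f) + d_z(M₂ D_z f))` as a matrix. -/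
def diffusionMatrix [NeZero N] (M : Fin 3 → GridIdx N → ℝ) :
    Matrix (GridIdx N) (GridIdx N) ℝ :=
  weightedLaplacian (N : ℝ) (axisShift N) M

variable {N}

lemma apply_eq_of_axisShift_invariant [NeZero N] {f : GridIdx N → ℝ}
    (hf : ∀ a q, f (axisShift N a q) = f q) (q r : GridIdx N) : f q = f r := by
  have h0 : ∀ q, f q = f (0, 0, 0) := fun ⟨i, j, k⟩ =>
    calc f (i, j, k) = f (0, j, k) := apply_eq_apply_zero_of_periodic (f := fun i => f (i, j, k))
          (fun i => by simpa [axisShift] using hf 0 (i, j, k)) i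
      _ = f (0, 0, k) := apply_eq_apply_zero_of_periodic (f := fun j => f (0, j, k))
          (fun j => by simpa [axisShift] using hf 1 (0, j, k)) j
      _ = f (0, 0, 0) := apply_eq_apply_zero_of_periodic (f := fun k => f (0, 0, k))
          (fun k => by simpa [axisShift] using hf 2 (0, 0, k)) k
  rw [h0 q, h0 r]

variable [NeZero N]

lemma diffusionMatrix_mulVec (M : Fin 3 → GridIdx N → ℝ) (f : GridIdx N → ℝ) (q : GridIdx N) :
    (diffusionMatrix N M *ᵥ f) q = -(dxm N (fun r => M 0 r * Dx N f r) q +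
      dym N (fun r => M 1 r * Dy N f r) q + dzm N (fun r => M 2 r * Dz N f r) q) := by
  simp only [diffusionMatrix, axisShift, weightedLaplacian_mulVec, Fin.sum_univ_three, Fin.isValue,
    cons_val_zero, cons_val_one, cons_val, Equiv.Perm.coe_inv, Equiv.addRight_symm,
    Equiv.coe_addRight, Prod.neg_mk, Prod.add_def, Prod.mk.eta, neg_zero, add_zero,
    neg_add_cancel_right, neg_add_rev, dxm, dym, dzm, Dx, Dy, Dz, xsh, ysh, zsh]
  ring

lemma diffusionMatrix_one_mulVec (f : GridIdx N → ℝ) :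
    diffusionMatrix N 1 *ᵥ f = fun q => -lap N f q := by
  ext q
  simp [diffusionMatrix_mulVec, lap]

lemma posSemidef_diffusionMatrix_one : (diffusionMatrix N 1).PosSemidef :=
  posSemidef_weightedLaplacian zero_le_one

lemma apply_eq_of_diffusionMatrix_one_mulVec_eq_zero {f : GridIdx N → ℝ}
    (hf : diffusionMatrix N 1 *ᵥ f = 0) (q r : GridIdx N) : f q = f r :=
  apply_eq_of_axisShift_invariant (apply_eq_of_weightedLaplacian_mulVec_eq_zero
    (Nat.cast_ne_zero.2 (NeZero.ne N)) (fun _ _ => one_pos) hf) q r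

lemma zeroMean_and_neg_lap_eq_iff {r : GridIdx N → ℝ} (hr : zeroMean N r) (φ : GridIdx N → ℝ) :
    (zeroMean N φ ∧ ∀ q, -lap N φ q = r q) ↔ φ = greenMatrix (diffusionMatrix N 1) *ᵥ r := by
  rw [← sum_eq_zero_and_mulVec_eq_iff posSemidef_diffusionMatrix_one weightedLaplacian_mulVec_one
    (fun _ => apply_eq_of_diffusionMatrix_one_mulVec_eq_zero) hr, diffusionMatrix_one_mulVec,
    funext_iff, zeroMean]

end Grid

section Scheme

variable {N : ℕ}

/-- The three face mobilities built from the time levels `a` and `b`. -/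
noncomputable def mobility (N : ℕ) (dt : ℝ) (a b : GridIdx N → ℝ) : Fin 3 → GridIdx N → ℝ :=
  ![mobX N dt a b, mobY N dt a b, mobZ N dt a b]

lemma mobility_nonneg (dt : ℝ) (a b : GridIdx N → ℝ) : 0 ≤ mobility N dt a b := by
  intro i q
  fin_cases i <;> exact Real.sqrt_nonneg _

variable [NeZero N]

variable (N) in
/-- The electrostatic coupling of the stacked unknown `(n, p)`: the matrix of
`(n, p) ↦ (ψ, -ψ)` where `-Δ_h ψ = (n - p) / 2`. -/
noncomputable def coulombMatrix : Matrix (GridIdx N ⊕ GridIdx N) (GridIdx N ⊕ GridIdx N) ℝ :=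
  let G := greenMatrix (diffusionMatrix N 1)
  (1 / 2 : ℝ) • fromBlocks G (-G) (-G) G

lemma posSemidef_coulombMatrix : (coulombMatrix N).PosSemidef :=
  (posSemidef_fromBlocks_neg (posSemidef_greenMatrix posSemidef_diffusionMatrix_one
    fun _ => apply_eq_of_diffusionMatrix_one_mulVec_eq_zero)).smul one_half_pos.le

lemma coulombMatrix_mulVec_sumElim (n p : GridIdx N → ℝ) :
    coulombMatrix N *ᵥ Sum.elim n p =
      Sum.elim (greenMatrix (diffusionMatrix N 1) *ᵥ ((1 / 2 : ℝ) • (n - p)))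
        (greenMatrix (diffusionMatrix N 1) *ᵥ ((1 / 2 : ℝ) • (p - n))) := by
  simp only [coulombMatrix, smul_mulVec, fromBlocks_mulVec, Sum.elim_comp_inl, Sum.elim_comp_inr,
    neg_mulVec, mulVec_smul, mulVec_sub]
  ext (q | q) <;> simp only [Sum.elim_inl, Sum.elim_inr, Pi.smul_apply, Pi.add_apply, Pi.sub_apply,
    Pi.neg_apply, smul_eq_mul] <;> ring

/-- The operator `(μ_n, μ_p) ↦ -Δt · (div (M_n ∇ μ_n), div (M_p ∇ μ_p))` acting on the stacked
chemical potential. -/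
noncomputable def evolutionMatrix (dt : ℝ) (Mn Mp : Fin 3 → GridIdx N → ℝ) :
    Matrix (GridIdx N ⊕ GridIdx N) (GridIdx N ⊕ GridIdx N) ℝ :=
  dt • fromBlocks (diffusionMatrix N Mn) 0 0 (diffusionMatrix N Mp)

lemma posSemidef_evolutionMatrix {dt : ℝ} (hdt : 0 ≤ dt) {Mn Mp : Fin 3 → GridIdx N → ℝ}
    (hMn : 0 ≤ Mn) (hMp : 0 ≤ Mp) : (evolutionMatrix dt Mn Mp).PosSemidef :=
  (posSemidef_fromBlocks_zero (posSemidef_weightedLaplacian hMn)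
    (posSemidef_weightedLaplacian hMp)).smul hdt

lemma evolutionMatrix_mulVec_sumElim (dt : ℝ) (Mn Mp : Fin 3 → GridIdx N → ℝ)
    (μn μp : GridIdx N → ℝ) :
    evolutionMatrix dt Mn Mp *ᵥ Sum.elim μn μp =
      Sum.elim (dt • diffusionMatrix N Mn *ᵥ μn) (dt • diffusionMatrix N Mp *ᵥ μp) := by
  simp only [evolutionMatrix, smul_mulVec, fromBlocks_mulVec, Sum.elim_comp_inl,
    Sum.elim_comp_inr, zero_mulVec, add_zero, zero_add]
  ext (q | q) <;> rfl

lemma add_smul_diffusionMatrix_mulVec_eq_iff {dt : ℝ} (hdt : dt ≠ 0) (M : Fin 3 → GridIdx N → ℝ)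
    (f₀ f₁ μ : GridIdx N → ℝ) :
    f₁ + dt • diffusionMatrix N M *ᵥ μ = f₀ ↔
      ∀ q, (f₁ q - f₀ q) / dt = dxm N (fun r => M 0 r * Dx N μ r) q +
        dym N (fun r => M 1 r * Dy N μ r) q + dzm N (fun r => M 2 r * Dz N μ r) q := by
  rw [funext_iff]
  refine forall_congr' fun q => ?_
  rw [div_eq_iff hdt, Pi.add_apply, Pi.smul_apply, diffusionMatrix_mulVec, smul_eq_mul]
  constructor <;> intro h <;> linear_combination h

lemma sum_eq_of_add_smul_diffusionMatrix_mulVec_eq {dt : ℝ} {M : Fin 3 → GridIdx N → ℝ}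
    (hM : 0 ≤ M) {f₀ f₁ μ : GridIdx N → ℝ} (h : f₁ + dt • diffusionMatrix N M *ᵥ μ = f₀) :
    ∑ q, f₁ q = ∑ q, f₀ q := by
  have hdiv : ∑ q, (diffusionMatrix N M *ᵥ μ) q = 0 := sum_weightedLaplacian_mulVec hM μ
  simp [← h, Finset.sum_add_distrib, ← Finset.mul_sum, hdiv]

/-- The part of the stacked chemical potential at the node `i` that depends on the unknown
`u = (n^{m+1}, p^{m+1})` only through `x = u i`, given `u₀ = (n^m, p^m)`. The midpoint rule
contributes `coulombMatrix N *ᵥ (u + u₀)`, whose `u₀` part is included here. -/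
noncomputable def nodePotential (dt : ℝ) (u₀ : GridIdx N ⊕ GridIdx N → ℝ)
    (i : GridIdx N ⊕ GridIdx N) (x : ℝ) : ℝ :=
  localPotential dt (u₀ i) x + (coulombMatrix N *ᵥ u₀) i

lemma strictMonoOn_nodePotential {dt : ℝ} (hdt : 0 < dt) {u₀ : GridIdx N ⊕ GridIdx N → ℝ}
    {i : GridIdx N ⊕ GridIdx N} (hi : 0 < u₀ i) :
    StrictMonoOn (nodePotential dt u₀ i) (Set.Ioi 0) := fun _ hx _ hy hxy =>
  add_lt_add_left (strictMonoOn_localPotential hdt hi hx hy hxy) _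

lemma surjOn_nodePotential {dt : ℝ} (hdt : 0 < dt) {u₀ : GridIdx N ⊕ GridIdx N → ℝ}
    {i : GridIdx N ⊕ GridIdx N} (hi : 0 < u₀ i) :
    Set.SurjOn (nodePotential dt u₀ i) (Set.Ioi 0) Set.univ := fun w _ =>
  let ⟨x, hx, hxw⟩ := surjOn_localPotential hdt hi (Set.mem_univ (w - (coulombMatrix N *ᵥ u₀) i))
  ⟨x, hx, eq_sub_iff_add_eq.1 hxw⟩

lemma nodePotential_add_coulombMatrix_mulVec (dt : ℝ) (n0 p0 n1 p1 : GridIdx N → ℝ) :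
    (fun i => nodePotential dt (Sum.elim n0 p0) i (Sum.elim n1 p1 i)) +
        coulombMatrix N *ᵥ Sum.elim n1 p1 =
      Sum.elim
        (fun q => localPotential dt (n0 q) (n1 q) + (greenMatrix (diffusionMatrix N 1) *ᵥ
          fun q => (n1 q + n0 q) / 2 - (p1 q + p0 q) / 2) q)
        (fun q => localPotential dt (p0 q) (p1 q) + (greenMatrix (diffusionMatrix N 1) *ᵥ
          fun q => (p1 q + p0 q) / 2 - (n1 q + n0 q) / 2) q) := by
  have hmid : ∀ a₀ a₁ b₀ b₁ : GridIdx N → ℝ,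
      (fun q => (a₁ q + a₀ q) / 2 - (b₁ q + b₀ q) / 2) =
        (1 / 2 : ℝ) • (a₀ - b₀) + (1 / 2 : ℝ) • (a₁ - b₁) := fun a₀ a₁ b₀ b₁ => by
    ext q
    simp only [Pi.add_apply, Pi.smul_apply, Pi.sub_apply, smul_eq_mul]
    ring
  simp only [nodePotential, hmid, mulVec_add, coulombMatrix_mulVec_sumElim]
  ext (q | q) <;> exact add_assoc _ _ _

variable {dt Dc : ℝ} {n0 nm1 p0 pm1 n1 p1 : GridIdx N → ℝ}

theorem solvesScheme_iff (hdt : dt ≠ 0) (hz0 : zeroMean N fun q => n0 q - p0 q)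
    (hz1 : zeroMean N fun q => n1 q - p1 q) :
    SolvesScheme N dt Dc n0 nm1 p0 pm1 n1 p1 ↔
      Sum.elim n1 p1 + evolutionMatrix dt (mobility N dt n0 nm1)
          (mobility N dt (fun q => Dc * p0 q) (fun q => Dc * pm1 q)) *ᵥ
        ((fun i => nodePotential dt (Sum.elim n0 p0) i (Sum.elim n1 p1 i)) +
          coulombMatrix N *ᵥ Sum.elim n1 p1) = Sum.elim n0 p0 := by
  have hsum : ∑ q, n0 q = ∑ q, p0 q ∧ ∑ q, n1 q = ∑ q, p1 q := by
    simpa only [zeroMean, Finset.sum_sub_distrib, sub_eq_zero] using And.intro hz0 hz1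
  have hrn : zeroMean N fun q => (n1 q + n0 q) / 2 - (p1 q + p0 q) / 2 := by
    simp only [zeroMean, Finset.sum_sub_distrib, ← Finset.sum_div, Finset.sum_add_distrib, hsum,
      sub_self]
  have hrp : zeroMean N fun q => (p1 q + p0 q) / 2 - (n1 q + n0 q) / 2 := by
    simp only [zeroMean, Finset.sum_sub_distrib, ← Finset.sum_div, Finset.sum_add_distrib, hsum,
      sub_self]
  rw [nodePotential_add_coulombMatrix_mulVec, evolutionMatrix_mulVec_sumElim, ← Sum.elim_add_add,
    Sum.elim_eq_iff, add_smul_diffusionMatrix_mulVec_eq_iff hdt,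
    add_smul_diffusionMatrix_mulVec_eq_iff hdt]
  constructor
  · rintro ⟨μn, μp, φn, φp, hφn, hlapn, hφp, hlapp, hμn, hμp, hn, hp⟩
    obtain rfl := (zeroMean_and_neg_lap_eq_iff hrn φn).1 ⟨hφn, hlapn⟩
    obtain rfl := (zeroMean_and_neg_lap_eq_iff hrp φp).1 ⟨hφp, hlapp⟩
    obtain rfl := funext hμn
    obtain rfl := funext hμp
    exact ⟨hn, hp⟩
  · rintro ⟨hn, hp⟩
    obtain ⟨hφn, hlapn⟩ := (zeroMean_and_neg_lap_eq_iff hrn _).2 rfl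
    obtain ⟨hφp, hlapp⟩ := (zeroMean_and_neg_lap_eq_iff hrp _).2 rfl
    exact ⟨_, _, _, _, hφn, hlapn, hφp, hlapp, fun _ => rfl, fun _ => rfl, hn, hp⟩

lemma zeroMean_of_add_evolutionMatrix_mulVec_eq (hz0 : zeroMean N fun q => n0 q - p0 q)
    {Mn Mp : Fin 3 → GridIdx N → ℝ} (hMn : 0 ≤ Mn) (hMp : 0 ≤ Mp)
    {μ : GridIdx N ⊕ GridIdx N → ℝ}
    (h : Sum.elim n1 p1 + evolutionMatrix dt Mn Mp *ᵥ μ = Sum.elim n0 p0) :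
    zeroMean N fun q => n1 q - p1 q := by
  obtain ⟨μn, μp, rfl⟩ : ∃ μn μp, μ = Sum.elim μn μp :=
    ⟨_, _, (Sum.elim_comp_inl_inr μ).symm⟩
  rw [evolutionMatrix_mulVec_sumElim, ← Sum.elim_add_add, Sum.elim_eq_iff] at h
  rw [zeroMean, Finset.sum_sub_distrib] at hz0 ⊢
  rw [sum_eq_of_add_smul_diffusionMatrix_mulVec_eq hMn h.1,
    sum_eq_of_add_smul_diffusionMatrix_mulVec_eq hMp h.2, hz0]

lemma pos_and_zeroMean_and_solvesScheme_iff (hdt : dt ≠ 0)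
    (hz0 : zeroMean N fun q => n0 q - p0 q) :
    ((∀ q, 0 < n1 q) ∧ (∀ q, 0 < p1 q) ∧ zeroMean N (fun q => n1 q - p1 q) ∧
        SolvesScheme N dt Dc n0 nm1 p0 pm1 n1 p1) ↔
      (∀ i, Sum.elim n1 p1 i ∈ Set.Ioi 0) ∧
        Sum.elim n1 p1 + evolutionMatrix dt (mobility N dt n0 nm1)
            (mobility N dt (fun q => Dc * p0 q) (fun q => Dc * pm1 q)) *ᵥ
          ((fun i => nodePotential dt (Sum.elim n0 p0) i (Sum.elim n1 p1 i)) +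
            coulombMatrix N *ᵥ Sum.elim n1 p1) = Sum.elim n0 p0 := by
  rw [Sum.forall, ← and_assoc]
  refine and_congr_right fun _ => ⟨fun ⟨hz1, h⟩ => (solvesScheme_iff hdt hz0 hz1).1 h, fun h => ?_⟩
  have hz1 := zeroMean_of_add_evolutionMatrix_mulVec_eq hz0 (mobility_nonneg _ _ _)
    (mobility_nonneg _ _ _) h
  exact ⟨hz1, (solvesScheme_iff hdt hz0 hz1).2 h⟩

end Scheme
end PNP

theorem stmt9_general (N : ℕ) [NeZero N] (dt Dc : ℝ) (hdt : 0 < dt)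
    (n0 nm1 p0 pm1 : GridIdx N → ℝ) (hn0 : ∀ q, 0 < n0 q) (hp0 : ∀ q, 0 < p0 q)
    (hzm0 : zeroMean N (fun q => n0 q - p0 q)) :
    ∃! np : (GridIdx N → ℝ) × (GridIdx N → ℝ),
      (∀ q, 0 < np.1 q) ∧ (∀ q, 0 < np.2 q) ∧
      zeroMean N (fun q => np.1 q - np.2 q) ∧
      SolvesScheme N dt Dc n0 nm1 p0 pm1 np.1 np.2 := by
  have hpos : ∀ i, 0 < Sum.elim n0 p0 i := Sum.forall.2 ⟨hn0, hp0⟩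
  refine ((Equiv.sumArrowEquivProdArrow _ _ _).existsUnique_congr fun u => ?_).1
    (existsUnique_add_mulVec_eq
      (posSemidef_evolutionMatrix hdt.le (mobility_nonneg dt n0 nm1)
        (mobility_nonneg dt (fun q => Dc * p0 q) fun q => Dc * pm1 q))
      posSemidef_coulombMatrix (fun _ => Set.ordConnected_Ioi)
      (fun i => strictMonoOn_nodePotential hdt (hpos i))
      (fun i => surjOn_nodePotential hdt (hpos i)) hpos)
  obtain ⟨n1, p1, rfl⟩ : ∃ n1 p1, u = Sum.elim n1 p1 := ⟨_, _, (Sum.elim_comp_inl_inr u).symm⟩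
  exact (pos_and_zeroMean_and_solvesScheme_iff hdt.ne' hzm0).symm

/-- Unique positive solvability of the second-order scheme. -/
theorem stmt9 (N : ℕ) [NeZero N] (dt Dc : ℝ) (hdt : 0 < dt) (hD : 0 < Dc)
    (n0 nm1 p0 pm1 : GridIdx N → ℝ)
    (hn0 : ∀ q, 0 < n0 q) (hnm1 : ∀ q, 0 < nm1 q)
    (hp0 : ∀ q, 0 < p0 q) (hpm1 : ∀ q, 0 < pm1 q)
    (hzm0 : zeroMean N (fun q => n0 q - p0 q))
    (hzm1 : zeroMean N (fun q => nm1 q - pm1 q)) :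
    ∃! np : (GridIdx N → ℝ) × (GridIdx N → ℝ),
      (∀ q, 0 < np.1 q) ∧ (∀ q, 0 < np.2 q) ∧
      zeroMean N (fun q => np.1 q - np.2 q) ∧
      SolvesScheme N dt Dc n0 nm1 p0 pm1 np.1 np.2 :=
  stmt9_general N dt Dc hdt n0 nm1 p0 pm1 hn0 hp0 hzm0
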